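/- arXiv:math/0505153 — 2 statements merged into one kernel-verified Lean document; each statement's English description precedes it below -/
import Mathlib

section
/- Define the operator T on differentiable functions f : ℝ∖{0} → ℝ by T(f)(x) = f'(x)/x, and let T^n denote its n-th iterate (T^0(f) = f). Then for every n ∈ ℕ and every z ≠ 0, the n-th iterate applied to the hyperbolic cosine satisfies T^n(cosh)(z) = Σ_{k=0}^{∞} z^{2k} / (2^k · k! · C_{2k+2n}), where C_{2m} = (2m)!/(2^m m!). Equivalently, T^n(cosh)(z) = Σ_{k=0}^{∞} 2^n (k+n)! z^{2k} / (k! (2k+2n)!). -/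
/-- The even Gaussian moments `C_{2m} = (2m)!/(2ᵐ m!)`. -/
noncomputable def gaussEvenMoment (m : ℕ) : ℝ :=
  (Nat.factorial (2 * m)) / (2 ^ m * Nat.factorial m)

/-- The operator `T(f)(x) = f'(x)/x`. -/
noncomputable def derivDiv (f : ℝ → ℝ) : ℝ → ℝ := fun x => deriv f x / x

/-- The coefficients. -/
noncomputable def coshCoef (n k : ℕ) : ℝ :=
  2 ^ n * (Nat.factorial (k + n)) / ((Nat.factorial k) * (Nat.factorial (2 * k + 2 * n)))

lemma coshCoef_nonneg (n k : ℕ) : 0 ≤ coshCoef n k := by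
  unfold coshCoef; positivity

lemma two_pow_mul_factorial_le (m : ℕ) : 2 ^ m * Nat.factorial m ≤ Nat.factorial (2 * m) := by
  induction m with
  | zero => simp
  | succ m ih =>
    rw [show 2 * (m + 1) = 2 * m + 1 + 1 by ring, Nat.factorial_succ (2 * m + 1),
      Nat.factorial_succ (2 * m), Nat.factorial_succ m]
    calc 2 ^ (m + 1) * ((m + 1) * m.factorial)
        = (2 * m + 2) * (1 * (2 ^ m * m.factorial)) := by ring
      _ ≤ (2 * m + 2) * ((2 * m + 1) * (2 * m).factorial) := by
        gcongr; omega

lemma coshCoef_le (n k : ℕ) : coshCoef n k ≤ 1 / (Nat.factorial k) := by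
  unfold coshCoef
  rw [← mul_add, div_le_div_iff₀ (by positivity) (by positivity), one_mul, mul_comm]
  gcongr
  have h1 : (2 : ℝ) ^ (k + n) * (Nat.factorial (k + n)) ≤ (Nat.factorial (2 * (k + n))) := by
    exact_mod_cast two_pow_mul_factorial_le (k + n)
  refine le_trans ?_ h1
  gcongr
  · norm_num
  · omega

lemma coshCoef_succ (n k : ℕ) : coshCoef n (k + 1) * (2 * (k + 1)) = coshCoef (n + 1) k := by
  unfold coshCoef
  rw [show k + 1 + n = k + (n + 1) by ring, show 2 * (k + 1) + 2 * n = 2 * k + 2 * (n + 1) by ring,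
    Nat.factorial_succ k]
  push_cast
  field_simp
  ring

lemma coshCoef_summable (n : ℕ) (z : ℝ) : Summable fun k => coshCoef n k * z ^ (2 * k) := by
  refine Summable.of_nonneg_of_le (fun k => ?_) (fun k => ?_) (Real.summable_pow_div_factorial (z ^ 2))
  · rw [pow_mul]
    have := coshCoef_nonneg n k
    positivity
  · rw [pow_mul, div_eq_mul_one_div, mul_comm]
    gcongr
    exact coshCoef_le n k

lemma coshSeries_shift (n : ℕ) (z : ℝ) (k : ℕ) :
    coshCoef n (k + 1) * (((2 * (k + 1) : ℕ) : ℝ) * z ^ (2 * (k + 1) - 1))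
      = z * (coshCoef (n + 1) k * z ^ (2 * k)) := by
  rw [← coshCoef_succ, show 2 * (k + 1) - 1 = 2 * k + 1 by omega]
  push_cast
  ring

lemma coshDeriv_summable (n : ℕ) (z : ℝ) :
    Summable fun k : ℕ => coshCoef n k * (((2 * k : ℕ) : ℝ) * z ^ (2 * k - 1)) := by
  rw [← summable_nat_add_iff 1]
  simp only [coshSeries_shift]
  exact (coshCoef_summable (n + 1) z).mul_left z

lemma coshSeries_hasDerivAt (n : ℕ) (z : ℝ) :
    HasDerivAt (fun y : ℝ => ∑' k, coshCoef n k * y ^ (2 * k))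
      (z * ∑' k, coshCoef (n + 1) k * z ^ (2 * k)) z := by
  have hz : z ∈ Metric.ball (0 : ℝ) (|z| + 1) := by simp
  have h := hasDerivAt_tsum_of_isPreconnected
    (g := fun (k : ℕ) (y : ℝ) => coshCoef n k * y ^ (2 * k))
    (g' := fun (k : ℕ) (y : ℝ) => coshCoef n k * (((2 * k : ℕ) : ℝ) * y ^ (2 * k - 1)))
    (coshDeriv_summable n (|z| + 1)) (Metric.isOpen_ball (x := (0 : ℝ)) (ε := |z| + 1))
    (convex_ball (0 : ℝ) (|z| + 1)).isPreconnected
    (fun k y _ => (hasDerivAt_pow (2 * k) y).const_mul _)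
    (fun k y hy => by
      have hy' : |y| < |z| + 1 := by simpa using hy
      have := coshCoef_nonneg n k
      rw [Real.norm_eq_abs, abs_mul, abs_mul, abs_pow, abs_of_nonneg this, Nat.abs_cast]
      gcongr)
    hz (coshCoef_summable n z) hz
  have he : (∑' k : ℕ, coshCoef n k * (((2 * k : ℕ) : ℝ) * z ^ (2 * k - 1)))
      = z * ∑' k, coshCoef (n + 1) k * z ^ (2 * k) := by
    rw [(coshDeriv_summable n z).tsum_eq_zero_add]
    simp only [coshSeries_shift, tsum_mul_left]
    simp
  rw [← he]
  exact h

lemma iterate_eq_coshSeries (n : ℕ) : ∀ z : ℝ, z ≠ 0 →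
    (derivDiv^[n] Real.cosh) z = ∑' k, coshCoef n k * z ^ (2 * k) := by
  induction n with
  | zero =>
    intro z _
    rw [Function.iterate_zero, id, Real.cosh_eq_tsum]
    refine tsum_congr fun k => ?_
    unfold coshCoef
    simp only [add_zero, mul_zero, pow_zero, one_mul]
    field_simp
  | succ n ih =>
    intro z hz
    rw [Function.iterate_succ_apply']
    have he : (derivDiv^[n] Real.cosh) =ᶠ[nhds z] fun y => ∑' k, coshCoef n k * y ^ (2 * k) := by
      filter_upwards [isOpen_ne.mem_nhds hz] with y hy using ih y hy
    rw [derivDiv, he.deriv_eq, (coshSeries_hasDerivAt n z).deriv]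
    field_simp

/-- For every `n` and every `z ≠ 0`, the `n`-th iterate of `T(f)(x) = f'(x)/x`
applied to `cosh` satisfies
`Tⁿ(cosh)(z) = ∑ₖ z^{2k}/(2ᵏ k! C_{2k+2n}) = ∑ₖ 2ⁿ (k+n)! z^{2k}/(k! (2k+2n)!)`. -/
theorem iterated_derivDiv_cosh (n : ℕ) (z : ℝ) (hz : z ≠ 0) :
    (derivDiv^[n] Real.cosh) z
        = ∑' k : ℕ, z ^ (2 * k)
            / (2 ^ k * (Nat.factorial k) * gaussEvenMoment (k + n)) ∧
    (derivDiv^[n] Real.cosh) z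
        = ∑' k : ℕ, 2 ^ n * (Nat.factorial (k + n)) * z ^ (2 * k)
            / ((Nat.factorial k) * (Nat.factorial (2 * k + 2 * n))) := by
  rw [iterate_eq_coshSeries n z hz]
  constructor
  · refine tsum_congr fun k => ?_
    unfold coshCoef gaussEvenMoment
    rw [← mul_add, pow_add]
    field_simp
  · refine tsum_congr fun k => ?_
    unfold coshCoef
    ring
end

section
/- Let C_α = ∫_ℝ |x|^α (2π)^{−1/2} e^{−x²/2} dx for α ≥ 0 (the α-th absolute moment of a standard Gaussian). Then for every real δ ≥ 1 and all integers i, k ≥ 0, C_{2(i+k)+δ−1} / (C_{2k+δ−1} · C_{2i+δ−1}) = Σ_{j=0}^{i} k(k−1)⋯(k−j+1) · binom(i,j) · 2^j / C_{2j+δ−1}, where the falling factorial k(k−1)⋯(k−j+1) is taken to equal 1 when j = 0. -/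
open MeasureTheory

/-- `C_α = ∫ |x|^α (2π)^{−1/2} e^{−x²/2} dx`, the `α`-th absolute moment of a
standard Gaussian. -/
noncomputable def gaussAbsMoment (α : ℝ) : ℝ :=
  ∫ x : ℝ, |x| ^ α * (Real.sqrt (2 * Real.pi))⁻¹ * Real.exp (-x ^ 2 / 2)

theorem gaussAbsMoment_eq (α : ℝ) (hα : 0 ≤ α) :
    gaussAbsMoment α = 2 * (Real.sqrt (2 * Real.pi))⁻¹ *
      ((1 / 2 : ℝ) ^ (-(α + 1) / 2) * (1 / 2) * Real.Gamma ((α + 1) / 2)) := by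
  have h := integral_rpow_mul_exp_neg_mul_rpow (p := 2) (q := α) (b := 1 / 2)
    (by norm_num) (by linarith) (by norm_num)
  have h2 := integral_comp_abs
    (f := fun x : ℝ => x ^ α * (Real.sqrt (2 * Real.pi))⁻¹ * Real.exp (-x ^ 2 / 2))
  simp only [sq_abs] at h2
  unfold gaussAbsMoment
  rw [h2, ← h, mul_assoc, ← integral_const_mul (√(2 * Real.pi))⁻¹]
  congr 2
  funext x
  rw [Real.rpow_two, show -x ^ 2 / 2 = -(1 / 2) * x ^ 2 by ring]
  ring

theorem gaussAbsMoment_pos (α : ℝ) (hα : 0 ≤ α) : 0 < gaussAbsMoment α := by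
  rw [gaussAbsMoment_eq α hα]
  have := Real.Gamma_pos_of_pos (s := (α + 1) / 2) (by linarith)
  have := Real.pi_pos
  positivity

theorem gaussAbsMoment_add_two (α : ℝ) (hα : 0 ≤ α) :
    gaussAbsMoment (α + 2) = (α + 1) * gaussAbsMoment α := by
  rw [gaussAbsMoment_eq α hα, gaussAbsMoment_eq (α + 2) (by linarith),
    show (α + 2 + 1) / 2 = (α + 1) / 2 + 1 by ring,
    Real.Gamma_add_one (by linarith),
    show -(α + 2 + 1) / 2 = -(α + 1) / 2 - 1 by ring,
    Real.rpow_sub_one (by norm_num)]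
  ring

/-- Chu–Vandermonde type identity for sequences with a linear first order recurrence. -/
theorem sum_falling_aux (i : ℕ) : ∀ (δ x : ℝ) (c : ℕ → ℝ), (∀ j, c j ≠ 0) →
    (∀ j : ℕ, c (j + 1) = (2 * j + δ) * c j) →
    ∑ j ∈ Finset.range (i + 1),
      (Nat.choose i j : ℝ) * ((∏ l ∈ Finset.range j, (x - l)) * 2 ^ j / c j)
      = (∏ l ∈ Finset.range i, (2 * x + 2 * l + δ)) / c i := by
  induction i with
  | zero => intro δ x c _ _; simp
  | succ i ih =>
    intro δ x c h0 hc
    have h1 := Finset.sum_choose_succ_mul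
      (fun j _ => (∏ l ∈ Finset.range j, (x - l)) * 2 ^ j / c j) i
    rw [h1, ih δ x c h0 hc]
    have h2 := ih (δ + 2) (x - 1) (fun j => c (j + 1)) (fun j => h0 _)
      (fun j => by rw [hc]; push_cast; ring)
    have h3 : ∑ j ∈ Finset.range (i + 1), (Nat.choose i j : ℝ) *
        ((∏ l ∈ Finset.range (j + 1), (x - l)) * 2 ^ (j + 1) / c (j + 1))
        = 2 * x * ((∏ l ∈ Finset.range i, (2 * x + 2 * l + δ)) / c (i + 1)) := by
      have h4 : ∏ l ∈ Finset.range i, (2 * x + 2 * (l : ℝ) + δ)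
          = ∏ l ∈ Finset.range i, (2 * (x - 1) + 2 * (l : ℝ) + (δ + 2)) :=
        Finset.prod_congr rfl fun l _ => by ring
      rw [h4, ← h2, Finset.mul_sum]
      refine Finset.sum_congr rfl fun j _ => ?_
      rw [Finset.prod_range_succ']
      have h5 : ∏ l ∈ Finset.range j, (x - ((l + 1 : ℕ) : ℝ))
          = ∏ l ∈ Finset.range j, (x - 1 - (l : ℝ)) :=
        Finset.prod_congr rfl fun l _ => by push_cast; ring
      rw [h5]
      push_cast
      ring
    rw [h3, Finset.prod_range_succ]
    have ha := h0 i
    have hb := h0 (i + 1)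
    rw [hc] at hb ⊢
    have hd := left_ne_zero_of_mul hb
    field_simp
    ring

/-- For `δ ≥ 1` and `i, k ∈ ℕ`,
`C_{2(i+k)+δ−1}/(C_{2k+δ−1} C_{2i+δ−1})
  = ∑_{j=0}^i k(k−1)⋯(k−j+1) binom(i,j) 2^j / C_{2j+δ−1}`. -/
theorem gaussAbsMoment_ratio_falling_factorial (δ : ℝ) (hδ : 1 ≤ δ) (i k : ℕ) :
    gaussAbsMoment (2 * ((i : ℝ) + k) + δ - 1)
        / (gaussAbsMoment (2 * (k : ℝ) + δ - 1) * gaussAbsMoment (2 * (i : ℝ) + δ - 1))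
      = ∑ j ∈ Finset.range (i + 1),
          (∏ l ∈ Finset.range j, ((k : ℝ) - l))
            * (Nat.choose i j : ℝ) * 2 ^ j / gaussAbsMoment (2 * (j : ℝ) + δ - 1) := by
  have hn : ∀ j : ℕ, (0 : ℝ) ≤ 2 * (j : ℝ) + δ - 1 := fun j => by
    have : (0 : ℝ) ≤ j := Nat.cast_nonneg j
    linarith
  have h0 : ∀ j : ℕ, gaussAbsMoment (2 * (j : ℝ) + δ - 1) ≠ 0 := fun j =>
    (gaussAbsMoment_pos _ (hn j)).ne'
  have hc : ∀ j : ℕ, gaussAbsMoment (2 * ((j + 1 : ℕ) : ℝ) + δ - 1)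
      = (2 * j + δ) * gaussAbsMoment (2 * (j : ℝ) + δ - 1) := fun j => by
    have := gaussAbsMoment_add_two _ (hn j)
    rw [show 2 * ((j + 1 : ℕ) : ℝ) + δ - 1 = 2 * (j : ℝ) + δ - 1 + 2 by push_cast; ring, this]
    ring
  have key := sum_falling_aux i δ k (fun j => gaussAbsMoment (2 * (j : ℝ) + δ - 1)) h0 hc
  have hp : ∀ n : ℕ, gaussAbsMoment (2 * ((n : ℝ) + k) + δ - 1)
      = (∏ l ∈ Finset.range n, (2 * (k : ℝ) + 2 * l + δ))
        * gaussAbsMoment (2 * (k : ℝ) + δ - 1) := fun n => by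
    induction n with
    | zero => simp
    | succ n ih =>
      have h := hc (n + k)
      rw [Finset.prod_range_succ]
      push_cast at h ⊢
      rw [show 2 * ((n : ℝ) + 1 + k) + δ - 1 = 2 * ((n : ℝ) + k + 1) + δ - 1 by ring, h, ih]
      ring
  rw [hp i, mul_comm (∏ l ∈ Finset.range i, _), mul_div_mul_left _ _ (h0 k), ← key]
  refine Finset.sum_congr rfl fun j _ => ?_
  ring
end
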